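/- Let V be a real Hilbert space, let R, γ > 0, let d ∈ ℕ with d ≤ R²/γ², and suppose e₁,…,e_d ∈ V is an orthonormal family. Then the set {R·e₁, …, R·e_d} is shattered by the partial concept class H_{R,γ}: for every labeling y ∈ {0,1}^d, the labeled sample ((R·e₁, y₁),…,(R·e_d, y_d)) is (R,γ)-separable — the points lie in the closed ball of radius R around the origin, and the distance between the convex hull of {R·eᵢ : yᵢ = 1} and the convex hull of {R·eᵢ : yᵢ = 0} is at least 2γ (as witnessed by the unit-norm vector w = (γ/R)·(Σ_{i: yᵢ=1} eᵢ − Σ_{i: yᵢ=0} eᵢ)). Consequently VC(H_{R,γ}) ≥ ⌊R²/γ²⌋ whenever V contains an orthonormal family of that size. -/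

import Mathlib

/-! Write `s i = ±1` for the sign of the label of `R • e i` and let `z = ∑ i, s i • e i`. Then
`⟪R • e i, z⟫ = R * s i`, so the linear functional `⟪·, z⟫` is at least `R` on the hull of the
positive points and at most `-R` on the hull of the negative ones. As `‖z‖ = √d ≤ R / γ`,
Cauchy–Schwarz gives `2 R ≤ ⟪u - w, z⟫ ≤ ‖u - w‖ * (R / γ)`, that is `2 γ ≤ ‖u - w‖`. The argument
(`rgSeparable_of_labels`) covers any sample drawn from the labeled points, with repetitions or
omissions, and this is what membership of the partial concept supported on
`{R • e 1, …, R • e d}` in the margin class requires.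
-/

/-- A finite set `U` is shattered by the partial concept class `H`. -/
def Shatters {X : Type*} (H : Set (X → Option Bool)) (U : Finset X) : Prop :=
  ∀ f : X → Bool, ∃ h ∈ H, ∀ x ∈ U, h x = some (f x)

/-- A labeled sample in a real Hilbert space is `(R,γ)`-separable: all points lie in a closed
ball of radius `R`, and the convex hulls of the `1`-labeled and `0`-labeled points are at
distance at least `2γ`. -/
def RGSeparable {V : Type*} [NormedAddCommGroup V] [InnerProductSpace ℝ V]
    (R γ : ℝ) (S : List (V × Bool)) : Prop :=
  (∃ c : V, ∀ p ∈ S, ‖p.1 - c‖ ≤ R) ∧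
  ∀ u ∈ convexHull ℝ {x : V | (x, true) ∈ S},
    ∀ w ∈ convexHull ℝ {x : V | (x, false) ∈ S}, 2 * γ ≤ ‖u - w‖

/-- The partial concept class `H_{R,γ}` of all partial concepts every finite sample of which
is `(R,γ)`-separable. -/
def MarginClass (V : Type*) [NormedAddCommGroup V] [InnerProductSpace ℝ V]
    (R γ : ℝ) : Set (V → Option Bool) :=
  {h | ∀ S : List (V × Bool), (∀ p ∈ S, h p.1 = some p.2) → RGSeparable R γ S}

/-- If every entry of the sample `S` is one of the labeled points `(R • e i, y i)`, then `S` is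
`(R,γ)`-separable. -/
theorem rgSeparable_of_labels {V : Type*} [NormedAddCommGroup V] [InnerProductSpace ℝ V]
    {R γ : ℝ} (hR : 0 < R) (hγ : 0 < γ) {d : ℕ} (hd : (d : ℝ) ≤ R ^ 2 / γ ^ 2)
    {e : Fin d → V} (he : Orthonormal ℝ e) (y : Fin d → Bool) (S : List (V × Bool))
    (hS : ∀ p ∈ S, ∃ i, p = (R • e i, y i)) : RGSeparable R γ S := by
  refine ⟨⟨0, fun p hp => ?_⟩, fun u hu w hw => ?_⟩
  · obtain ⟨i, rfl⟩ := hS p hp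
    simp [norm_smul, he.1 i, abs_of_pos hR]
  let s : Fin d → ℝ := fun i => if y i then 1 else -1
  let z : V := ∑ i, s i • e i
  have hval (i : Fin d) : inner ℝ z (R • e i) = R * s i := by
    rw [real_inner_comm, real_inner_smul_left, he.inner_right_fintype]
  have hz : ‖z‖ ≤ R / γ := by
    have hsq : ‖z‖ ^ 2 = d := by
      rw [← real_inner_self_eq_norm_sq, he.inner_sum]
      have (i : Fin d) : s i * s i = 1 := by
        simp only [s]; split <;> norm_num
      simp [this]
    refine le_of_sq_le_sq ?_ (by positivity)
    rw [hsq, div_pow]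
    exact hd
  have hu' : R ≤ inner ℝ z u := by
    refine convexHull_min (t := {x | R ≤ inner ℝ z x}) (fun x hx => ?_)
      (convex_halfSpace_ge (innerₗ V z).isLinear R) hu
    obtain ⟨i, hi⟩ := hS _ hx
    obtain ⟨rfl, hyi⟩ := Prod.mk.inj hi
    simp [hval, s, ← hyi]
  have hw' : inner ℝ z w ≤ -R := by
    refine convexHull_min (t := {x | inner ℝ z x ≤ -R}) (fun x hx => ?_)
      (convex_halfSpace_le (innerₗ V z).isLinear (-R)) hw
    obtain ⟨i, hi⟩ := hS _ hx
    obtain ⟨rfl, hyi⟩ := Prod.mk.inj hi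
    simp [hval, s, ← hyi]
  have hcs : 2 * R ≤ R / γ * ‖u - w‖ := calc
    2 * R ≤ inner ℝ z (u - w) := by rw [inner_sub_right]; linarith
    _ ≤ ‖z‖ * ‖u - w‖ := real_inner_le_norm _ _
    _ ≤ R / γ * ‖u - w‖ := by gcongr
  rw [div_mul_eq_mul_div, le_div_iff₀ hγ] at hcs
  nlinarith

/-- if `d ≤ R²/γ²` and `e₁,…,e_d` is an orthonormal family in a real
Hilbert space `V`, then every labeling of `R·e₁,…,R·e_d` is `(R,γ)`-separable, so this set
is shattered by `H_{R,γ}`; consequently `VC(H_{R,γ}) ≥ ⌊R²/γ²⌋` whenever `V` contains an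
orthonormal family of that size. -/
theorem margin_class_shatters_orthonormal_scaled {V : Type*} [NormedAddCommGroup V]
    [InnerProductSpace ℝ V] [CompleteSpace V]
    (R γ : ℝ) (hR : 0 < R) (hγ : 0 < γ) (d : ℕ) (hd : (d : ℝ) ≤ R ^ 2 / γ ^ 2)
    (e : Fin d → V) (he : Orthonormal ℝ e) :
    (∀ y : Fin d → Bool,
      RGSeparable R γ (List.ofFn fun i => (R • e i, y i))) ∧
    ∃ U : Finset V, Shatters (MarginClass V R γ) U ∧ U.card = d := by
  classical
  refine ⟨fun y => rgSeparable_of_labels hR hγ hd he y _ fun p hp => ?_,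
    Finset.univ.image fun i => R • e i, fun f => ?_, ?_⟩
  · obtain ⟨i, hi⟩ := (List.mem_ofFn' _ _).1 hp
    exact ⟨i, hi.symm⟩
  · refine ⟨fun x => if x ∈ Finset.univ.image (fun i => R • e i) then some (f x) else none,
      fun S hS => rgSeparable_of_labels hR hγ hd he (fun i => f (R • e i)) S fun p hp => ?_,
      fun x hx => if_pos hx⟩
    have h := hS p hp
    beta_reduce at h
    split_ifs at h with hmem
    obtain ⟨i, -, hi⟩ := Finset.mem_image.1 hmem
    refine ⟨i, Prod.ext hi.symm ?_⟩
    rw [hi]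
    exact (Option.some.inj h).symm
  · have hinj : Function.Injective fun i => R • e i :=
      (smul_right_injective V hR.ne').comp he.linearIndependent.injective
    rw [Finset.card_image_of_injective _ hinj]
    simp
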